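/- Suppose g(r) = o(r^{-c}) as r → ∞ for some c > 2d, and fix γ > 0. Let L_n(γ) be the length (in the toroidal metric) of the longest edge of the graph G_n(r̂_n(γ)) (with L_n(γ) := 0 if there are no edges). Then almost surely, limsup_{n→∞} (log L_n(γ))/(log n) ≤ −(c − 2d)/(d(c − d)). -/

import Mathlib

/-!
A pair of points at distance `x` is joined with probability `g (x / r)`, of order at most
`(r / x) ^ c`. Integrating over the torus, the probability that a given pair is joined by an edge
longer than `ℓ` is at most of order `r ^ c ℓ ^ (d - c)`. There are about `n ^ 2` pairs and `r̂_n` is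
`n ^ (-1 / d)` up to logarithms, so the probability that `L_n` exceeds `n ^ (-b)` is polynomially
small as soon as `b < (c - 2d) / (d (c - d))`. It need not be summable in `n`, but it is along
`n = 2 ^ k`, and the monotonicity of `N_n` and `r̂_n` transfers the bound to each dyadic block
at the cost of constants.

Since the real `limsup` is only meaningful for bounded sequences, a lower bound is needed as well:
among the disjoint pairs `(X_{2l+1}, X_{2l+2})` with `2l + 2 ≤ N_n`, some pair at distance of order
`r̂_n` is joined, and therefore `n ^ (-1 / d) ≤ L_n` eventually.
-/

open MeasureTheory ProbabilityTheory Filter Set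

noncomputable section

namespace RCM

/-- The toroidal metric on the unit cube. -/
def torusDist {d : ℕ} (x y : EuclideanSpace ℝ (Fin d)) : ℝ :=
  ⨅ z : Fin d → ℤ, ‖x - y - (WithLp.equiv 2 (Fin d → ℝ)).symm (fun i => (z i : ℝ))‖

/-- The half-open unit cube `S = (-1/2, 1/2]^d`. -/
def cube (d : ℕ) : Set (EuclideanSpace ℝ (Fin d)) :=
  {x | ∀ i, x i ∈ Set.Ioc (-(1/2) : ℝ) (1/2)}

/-- The random connection model: i.i.d. uniform points `X`, coupled Poisson counts `N`,
i.i.d. uniform edge variables `U`, with the three families mutually independent, and a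
non-increasing connection function `g : [0,∞) → [0,1]` with finite positive integral `α`. -/
structure Model (d : ℕ) {Ω : Type*} [MeasurableSpace Ω] (P : Measure Ω) where
  g : ℝ → ℝ
  α : ℝ
  X : ℕ → Ω → EuclideanSpace ℝ (Fin d)
  N : ℕ → Ω → ℕ
  U : ℕ → ℕ → Ω → ℝ
  g_antitone : AntitoneOn g (Set.Ici 0)
  g_mem : ∀ r : ℝ, 0 ≤ r → g r ∈ Set.Icc (0 : ℝ) 1
  g_integrable : MeasureTheory.Integrable (fun x : EuclideanSpace ℝ (Fin d) => g ‖x‖)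
  α_def : α = ∫ x : EuclideanSpace ℝ (Fin d), g ‖x‖
  α_pos : 0 < α
  X_meas : ∀ i, Measurable (X i)
  X_unif : ∀ i : ℕ, 1 ≤ i → Measure.map (X i) P = volume.restrict (cube d)
  X_indep : iIndepFun
    (fun i : {i : ℕ // 1 ≤ i} => X i) P
  N_meas : ∀ n, Measurable (N n)
  N_mono : ∀ ω, Monotone fun n => N n ω
  N_poisson : ∀ n k : ℕ,
    P {ω | N n ω = k} = ENNReal.ofReal (Real.exp (-(n : ℝ)) * (n : ℝ) ^ k / k.factorial)
  U_meas : ∀ i j, Measurable (U i j)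
  U_unif : ∀ i j : ℕ, 1 ≤ i → i < j →
    Measure.map (U i j) P = volume.restrict (Set.Icc (0 : ℝ) 1)
  U_indep : iIndepFun
    (fun p : {p : ℕ × ℕ // 1 ≤ p.1 ∧ p.1 < p.2} => U p.1.1 p.1.2) P
  families_indep : iIndep
    (![MeasurableSpace.comap (fun ω => fun i : ℕ => X i ω) inferInstance,
       MeasurableSpace.comap (fun ω => fun n : ℕ => N n ω) inferInstance,
       MeasurableSpace.comap (fun ω => fun p : ℕ × ℕ => U p.1 p.2 ω) inferInstance]) P

variable {d : ℕ} {Ω : Type*} [MeasurableSpace Ω] {P : Measure Ω}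

/-- Adjacency in the graph `G_n(r)`: vertices `1 ≤ i,j ≤ N_n` are joined iff
`U_{ij} ≤ g(dist(X_i,X_j)/r)`. -/
def adj (M : Model d P) (n : ℕ) (r : ℝ) (ω : Ω) (i j : ℕ) : Prop :=
  i ≠ j ∧ 1 ≤ i ∧ 1 ≤ j ∧ i ≤ M.N n ω ∧ j ≤ M.N n ω ∧
    M.U (min i j) (max i j) ω ≤ M.g (torusDist (M.X i ω) (M.X j ω) / r)

/-- The degree of vertex `i` in `G_n(r)`. -/
def deg (M : Model d P) (n : ℕ) (r : ℝ) (ω : Ω) (i : ℕ) : ℕ :=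
  {j : ℕ | adj M n r ω i j}.ncard

/-- `W_n(r)`, the number of isolated vertices of `G_n(r)`. -/
def isolatedCount (M : Model d P) (n : ℕ) (r : ℝ) (ω : Ω) : ℕ :=
  {i : ℕ | 1 ≤ i ∧ i ≤ M.N n ω ∧ deg M n r ω i = 0}.ncard


/-- `r̂_n(γ)` defined by `r̂_n(γ)^d = γ log n / (α n)`. -/
def rhat (M : Model d P) (γ : ℝ) (n : ℕ) : ℝ :=
  (γ * Real.log n / (M.α * n)) ^ ((1 : ℝ) / d)

/-- `d_n`, the critical parameter for absence of isolated nodes. -/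
def critRadius (M : Model d P) (n : ℕ) (ω : Ω) : ℝ :=
  sInf {r : ℝ | 0 < r ∧ isolatedCount M n r ω = 0}

/-- The maximum vertex degree `Δ_n` of `G_n(r)`. -/
def maxDeg (M : Model d P) (n : ℕ) (r : ℝ) (ω : Ω) : ℕ :=
  (Finset.Icc 1 (M.N n ω)).sup (deg M n r ω)

/-- The minimum vertex degree `δ_n` of `G_n(r)`. -/
def minDeg (M : Model d P) (n : ℕ) (r : ℝ) (ω : Ω) : ℕ :=
  sInf {k : ℕ | ∃ i, 1 ≤ i ∧ i ≤ M.N n ω ∧ deg M n r ω i = k}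

/-- The length (toroidal metric) of the longest edge of `G_n(r)` (`0` if there are no edges). -/
def longestEdge (M : Model d P) (n : ℕ) (r : ℝ) (ω : Ω) : ℝ :=
  sSup ({0} ∪ {t : ℝ | ∃ i j, adj M n r ω i j ∧ t = torusDist (M.X i ω) (M.X j ω)})

/-- Connectivity of `G_n(r)`: any two vertices are joined by a path. -/
def connectedGraph (M : Model d P) (n : ℕ) (r : ℝ) (ω : Ω) : Prop :=
  ∀ i j : ℕ, 1 ≤ i → i ≤ M.N n ω → 1 ≤ j → j ≤ M.N n ω →
    Relation.ReflTransGen (adj M n r ω) i j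

/-- `H(x) = 1 - x + x log x` (with `H(0) = 1`, since `log 0 = 0` in Lean). -/
def H (x : ℝ) : ℝ := 1 - x + x * Real.log x

/-- The inverse of the restriction of `H` to `[1, ∞)`. -/
def Hplusinv (y : ℝ) : ℝ := sInf {x : ℝ | 1 ≤ x ∧ y ≤ H x}

/-- The inverse of the restriction of `H` to `[0, 1]`. -/
def Hminusinv (y : ℝ) : ℝ := sInf {x : ℝ | 0 ≤ x ∧ H x ≤ y}

/-- The standard normal distribution function. -/
def stdNormalCDF (x : ℝ) : ℝ :=
  ∫ t in Set.Iic x, Real.exp (-t ^ 2 / 2) / Real.sqrt (2 * Real.pi)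

open scoped Pointwise NNReal

/-! ### The torus -/

/-- The lattice `ℤ^d ⊂ ℝ^d`, whose action on `ℝ^d` by translations has the torus as quotient. -/
def integerLattice (d : ℕ) : AddSubgroup (EuclideanSpace ℝ (Fin d)) :=
  ((WithLp.linearEquiv 2 ℝ (Fin d → ℝ)).symm.toLinearMap.toAddMonoidHom.comp
    ((Int.castAddHom ℝ).compLeft (Fin d))).range

instance : Countable (integerLattice d) :=
  Set.countable_coe_iff.2 (Set.countable_range _)

lemma measurableSet_cube : MeasurableSet (cube d) := by
  have : cube d = ⋂ i, (fun x : EuclideanSpace ℝ (Fin d) => x i) ⁻¹' Ioc (-(1 / 2)) (1 / 2) := by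
    ext x; simp [cube]
  rw [this]
  exact .iInter fun i => measurableSet_Ioc.preimage (by fun_prop)

lemma existsUnique_vadd_mem_cube (x : EuclideanSpace ℝ (Fin d)) :
    ∃! v : integerLattice d, v +ᵥ x ∈ cube d := by
  have mem_iff (z : Fin d → ℤ) : (WithLp.toLp 2 fun i => (z i : ℝ)) + x ∈ cube d ↔
      ∀ i, x i + z i • (1 : ℝ) ∈ Ioc (-(1 / 2) : ℝ) (-(1 / 2) + 1) := by
    simp only [cube, mem_ofPred_eq, PiLp.add_apply, zsmul_one, add_comm (x _)]
    norm_num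
  choose z hz z_unique using fun i =>
    existsUnique_add_zsmul_mem_Ioc (one_pos : (0 : ℝ) < 1) (x i) (-(1 / 2))
  refine ⟨⟨_, z, rfl⟩, (mem_iff z).2 hz, ?_⟩
  rintro ⟨_, w, rfl⟩ hw
  obtain rfl : w = z := funext fun i => z_unique i _ ((mem_iff w).1 hw i)
  rfl

lemma isAddFundamentalDomain_cube : IsAddFundamentalDomain (integerLattice d) (cube d) :=
  .mk' measurableSet_cube.nullMeasurableSet existsUnique_vadd_mem_cube

lemma isAddFundamentalDomain_vadd_cube (x : EuclideanSpace ℝ (Fin d)) :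
    IsAddFundamentalDomain (integerLattice d) (x +ᵥ cube d) :=
  have : VAddCommClass (EuclideanSpace ℝ (Fin d)) (integerLattice d) (EuclideanSpace ℝ (Fin d)) :=
    ⟨fun _ _ _ => add_left_comm _ _ _⟩
  isAddFundamentalDomain_cube.vadd_of_comm x

lemma torusDist_nonneg (x y : EuclideanSpace ℝ (Fin d)) : 0 ≤ torusDist x y :=
  Real.iInf_nonneg fun _ => norm_nonneg _

lemma torusDist_le_norm_sub (x y : EuclideanSpace ℝ (Fin d)) : torusDist x y ≤ ‖x - y‖ := by
  refine (ciInf_le ⟨0, ?_⟩ (0 : Fin d → ℤ)).trans_eq ?_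
  · rintro _ ⟨z, rfl⟩
    exact norm_nonneg _
  · congr 1
    ext i
    simp

lemma torusDist_vadd_right (x y : EuclideanSpace ℝ (Fin d)) (v : integerLattice d) :
    torusDist x (v +ᵥ y) = torusDist x y := by
  obtain ⟨_, z, rfl⟩ := v
  refine (Equiv.addRight z).iInf_congr fun w => ?_
  congr 1
  ext i
  change x i - y i - ((w i + z i : ℤ) : ℝ) = x i - (z i + y i) - w i
  push_cast
  ring

lemma measurable_torusDist : Measurable (Function.uncurry (torusDist (d := d))) := by
  unfold torusDist Function.uncurry
  exact .iInf fun z => by fun_prop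

lemma measurable_torusDist_prodMk {β : Type*} [MeasurableSpace β]
    {X Y : β → EuclideanSpace ℝ (Fin d)} (hX : Measurable X) (hY : Measurable Y) :
    Measurable fun b => torusDist (X b) (Y b) := by
  change Measurable (Function.uncurry torusDist ∘ fun b => (X b, Y b))
  exact measurable_torusDist.comp (hX.prodMk hY)

lemma abs_le_abs_sub_intCast {a : ℝ} (ha : |a| ≤ 1 / 2) (z : ℤ) : |a| ≤ |a - z| := by
  rcases eq_or_ne z 0 with rfl | hz
  · simp
  · have : (1 : ℝ) ≤ |(z : ℝ)| := by exact_mod_cast Int.one_le_abs hz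
    have := abs_sub_abs_le_abs_sub (z : ℝ) a
    rw [abs_sub_comm] at this
    linarith

lemma torusDist_add_right {w : EuclideanSpace ℝ (Fin d)} (hw : w ∈ cube d)
    (x : EuclideanSpace ℝ (Fin d)) : torusDist x (x + w) = ‖w‖ := by
  refine le_antisymm ((torusDist_le_norm_sub _ _).trans_eq (by simp)) (le_ciInf fun z => ?_)
  rw [← norm_neg w, EuclideanSpace.norm_eq, EuclideanSpace.norm_eq]
  gcongr with i
  have hwi : |(-w) i| ≤ 1 / 2 := by
    rw [PiLp.neg_apply, abs_neg]
    exact abs_le.2 ⟨(hw i).1.le, (hw i).2⟩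
  simpa using abs_le_abs_sub_intCast hwi (z i)

lemma volume_inter_vadd_cube {A : Set (EuclideanSpace ℝ (Fin d))} (hA : MeasurableSet A)
    (hA_inv : ∀ v : integerLattice d, (v +ᵥ ·) ⁻¹' A = A) (x : EuclideanSpace ℝ (Fin d)) :
    volume (A ∩ cube d) = volume (A ∩ (x +ᵥ cube d)) :=
  have : MeasurableConstVAdd (integerLattice d) (EuclideanSpace ℝ (Fin d)) :=
    ⟨fun v => measurable_const_add (v : EuclideanSpace ℝ (Fin d))⟩
  have : VAddInvariantMeasure (integerLattice d) (EuclideanSpace ℝ (Fin d)) volume :=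
    ⟨fun v s _ => measure_preimage_add volume (v : EuclideanSpace ℝ (Fin d)) s⟩
  isAddFundamentalDomain_cube.measure_set_eq (isAddFundamentalDomain_vadd_cube x) hA hA_inv

lemma map_torusDist_restrict_cube (x : EuclideanSpace ℝ (Fin d)) :
    (volume.restrict (cube d)).map (torusDist x) = (volume.restrict (cube d)).map norm := by
  have hdist : Measurable (torusDist x) := measurable_torusDist.of_uncurry_left
  ext B hB
  rw [Measure.map_apply hdist hB, Measure.map_apply measurable_norm hB,
    Measure.restrict_apply (hdist hB), Measure.restrict_apply (measurable_norm hB)]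
  calc volume (torusDist x ⁻¹' B ∩ cube d)
      = volume (torusDist x ⁻¹' B ∩ (x +ᵥ cube d)) :=
        volume_inter_vadd_cube (hdist hB)
          (fun v => by ext y; simp only [mem_preimage, torusDist_vadd_right]) x
    _ = volume (x +ᵥ (norm ⁻¹' B ∩ cube d)) := by
        congr 1
        rw [vadd_set_inter]
        ext y
        simp only [mem_inter_iff, mem_vadd_set_iff_neg_vadd_mem, and_congr_left_iff, vadd_eq_add,
          mem_preimage]
        intro hy
        rw [← torusDist_add_right hy x, add_neg_cancel_left]
    _ = volume (norm ⁻¹' B ∩ cube d) := measure_vadd volume x _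

/-! ### Integrals of radial powers -/

section Haar

open Module Metric

lemma measurableSet_lt_norm {E : Type*} [NormedAddCommGroup E] [MeasurableSpace E]
    [OpensMeasurableSpace E] (ℓ : ℝ) : MeasurableSet {x : E | ℓ < ‖x‖} :=
  measurableSet_lt measurable_const measurable_norm

variable {E : Type*} [NormedAddCommGroup E] [NormedSpace ℝ E] [FiniteDimensional ℝ E]
  [Nontrivial E] [MeasurableSpace E] [BorelSpace E] (μ : Measure E) [μ.IsAddHaarMeasure]

lemma measureReal_ball_diff_ball {a b : ℝ} (ha : 0 ≤ a) (hab : a ≤ b) :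
    μ.real (ball 0 b \ ball 0 a) = (b ^ finrank ℝ E - a ^ finrank ℝ E) * μ.real (ball 0 1) := by
  have ball_zero {t : ℝ} (ht : 0 ≤ t) :
      μ.real (ball 0 t) = t ^ finrank ℝ E * μ.real (ball 0 1) := by
    rw [measureReal_def, Measure.addHaar_ball μ 0 ht, ENNReal.toReal_mul,
      ENNReal.toReal_ofReal (by positivity), measureReal_def]
  rw [measureReal_sdiff (ball_subset_ball hab) measurableSet_ball, ball_zero ha,
    ball_zero (ha.trans hab), sub_mul]

lemma pow_smul_indicator_rpow_eqOn {n : ℕ} (hn : 1 ≤ n) (ℓ c : ℝ) :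
    EqOn (fun y : ℝ => y ^ (n - 1) • (Ioi ℓ).indicator (· ^ (-c)) y)
      ((Ioi ℓ).indicator (· ^ ((n : ℝ) - 1 - c))) (Ioi 0) := by
  intro y (hy : 0 < y)
  by_cases hyℓ : y ∈ Ioi ℓ
  · simp only [indicator_of_mem hyℓ, smul_eq_mul]
    rw [← Real.rpow_natCast, ← Real.rpow_add hy, Nat.cast_pred hn, sub_eq_add_neg _ c]
  · simp only [indicator_of_notMem hyℓ, smul_zero]

lemma integrableOn_norm_rpow_neg {c ℓ : ℝ} (hc : finrank ℝ E < c) (hℓ : 0 < ℓ) :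
    IntegrableOn (fun x : E => ‖x‖ ^ (-c)) {x | ℓ < ‖x‖} μ := by
  rw [← integrable_indicator_iff (measurableSet_lt_norm ℓ)]
  change Integrable (fun x => (Ioi ℓ).indicator (· ^ (-c)) ‖x‖) μ
  rw [integrable_fun_norm_addHaar μ, integrableOn_congr_fun
    (pow_smul_indicator_rpow_eqOn finrank_pos ℓ c) measurableSet_Ioi]
  exact ((integrable_indicator_iff measurableSet_Ioi).2
    (integrableOn_Ioi_rpow_of_lt (by linarith) hℓ)).integrableOn

lemma setIntegral_norm_rpow_neg {c ℓ : ℝ} (hc : finrank ℝ E < c) (hℓ : 0 < ℓ) :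
    ∫ x in {x : E | ℓ < ‖x‖}, ‖x‖ ^ (-c) ∂μ =
      finrank ℝ E * μ.real (ball 0 1) * (ℓ ^ (finrank ℝ E - c) / (c - finrank ℝ E)) := by
  rw [← integral_indicator (measurableSet_lt_norm ℓ)]
  change ∫ x, (Ioi ℓ).indicator (· ^ (-c)) ‖x‖ ∂μ = _
  rw [integral_fun_norm_addHaar μ, setIntegral_congr_fun measurableSet_Ioi
    (pow_smul_indicator_rpow_eqOn finrank_pos ℓ c), setIntegral_indicator measurableSet_Ioi,
    inter_eq_right.2 (Ioi_subset_Ioi hℓ.le), integral_Ioi_rpow_of_lt (by linarith) hℓ]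
  simp only [nsmul_eq_mul, smul_eq_mul]
  rw [sub_right_comm, sub_add_cancel, ← neg_div_neg_eq]
  ring_nf

end Haar

/-! ### Uniform points on the torus and their marks -/

lemma map_torusDist_of_indepFun [IsProbabilityMeasure P] {X Y : Ω → EuclideanSpace ℝ (Fin d)}
    (hX : Measurable X) (hY : Measurable Y) (hXY : IndepFun X Y P)
    (hY_unif : P.map Y = volume.restrict (cube d)) :
    P.map (fun ω => torusDist (X ω) (Y ω)) = (volume.restrict (cube d)).map norm := by
  have hprod := (indepFun_iff_map_prod_eq_prod_map_map hX.aemeasurable hY.aemeasurable).1 hXY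
  have : IsProbabilityMeasure (P.map X) := Measure.isProbabilityMeasure_map hX.aemeasurable
  have : IsProbabilityMeasure (P.map Y) := Measure.isProbabilityMeasure_map hY.aemeasurable
  ext B hB
  change P.map (Function.uncurry torusDist ∘ fun ω => (X ω, Y ω)) B = _
  rw [← Measure.map_map measurable_torusDist (hX.prodMk hY), hprod,
    Measure.map_apply measurable_torusDist hB, Measure.prod_apply (measurable_torusDist hB)]
  have law (x : EuclideanSpace ℝ (Fin d)) :
      P.map Y (Prod.mk x ⁻¹' (Function.uncurry torusDist ⁻¹' B)) =
        (volume.restrict (cube d)).map norm B := by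
    rw [← map_torusDist_restrict_cube x, hY_unif,
      Measure.map_apply measurable_torusDist.of_uncurry_left hB]
    rfl
  simp only [law, lintegral_const, measure_univ, mul_one]

section Threshold

variable {D U : Ω → ℝ}

lemma measureReal_preimage_Iic (hU : Measurable U)
    (hU_unif : P.map U = volume.restrict (Icc 0 1)) {p : ℝ} (hp : p ∈ Icc (0 : ℝ) 1) :
    P.real (U ⁻¹' Iic p) = p := by
  have : Iic p ∩ Icc 0 1 = Icc 0 p := by
    ext u
    simp only [mem_inter_iff, mem_Iic, mem_Icc]
    exact ⟨fun h => ⟨h.2.1, h.1⟩, fun h => ⟨h.2, h.1, h.2.trans hp.2⟩⟩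
  rw [← map_measureReal_apply hU measurableSet_Iic, hU_unif,
    measureReal_restrict_apply measurableSet_Iic, this, Real.volume_real_Icc_of_le hp.1, sub_zero]

lemma measure_mem_and_le_le [IsFiniteMeasure P] (hD : Measurable D) (hU : Measurable U)
    (hDU : IndepFun D U P) (hU_unif : P.map U = volume.restrict (Icc 0 1)) {B : Set ℝ}
    (hB : MeasurableSet B) {f : ℝ → ℝ} (hf : Measurable f) :
    P {ω | D ω ∈ B ∧ U ω ≤ f (D ω)} ≤ ∫⁻ t in B, ENNReal.ofReal (f t) ∂P.map D := by
  have hprod := (indepFun_iff_map_prod_eq_prod_map_map hD.aemeasurable hU.aemeasurable).1 hDU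
  set S : Set (ℝ × ℝ) := {p | p.1 ∈ B ∧ p.2 ≤ f p.1}
  have hS : MeasurableSet S :=
    (hB.preimage measurable_fst).inter (measurableSet_le measurable_snd (hf.comp measurable_fst))
  have section_le (t : ℝ) :
      P.map U (Prod.mk t ⁻¹' S) ≤ B.indicator (fun t => ENNReal.ofReal (f t)) t := by
    by_cases ht : t ∈ B
    · calc P.map U (Prod.mk t ⁻¹' S) = volume (Iic (f t) ∩ Icc 0 1) := by
            rw [hU_unif, ← Measure.restrict_apply measurableSet_Iic]
            congr 1
            ext u
            simp [S, ht]
        _ ≤ volume (Icc 0 (f t)) := measure_mono fun u hu => ⟨hu.2.1, hu.1⟩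
        _ = B.indicator (fun t => ENNReal.ofReal (f t)) t := by simp [ht]
    · simp [S, ht]
  calc P {ω | D ω ∈ B ∧ U ω ≤ f (D ω)} = P.map (fun ω => (D ω, U ω)) S :=
        (Measure.map_apply (hD.prodMk hU) hS).symm
    _ = ∫⁻ t, P.map U (Prod.mk t ⁻¹' S) ∂P.map D := by rw [hprod, Measure.prod_apply hS]
    _ ≤ ∫⁻ t, B.indicator (fun t => ENNReal.ofReal (f t)) t ∂P.map D := lintegral_mono section_le
    _ = ∫⁻ t in B, ENNReal.ofReal (f t) ∂P.map D := lintegral_indicator hB _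

lemma measureReal_lt_and_le_mul_rpow_le [IsFiniteMeasure P] [NeZero d] (hD : Measurable D)
    (hU : Measurable U) (hDU : IndepFun D U P) (hU_unif : P.map U = volume.restrict (Icc 0 1))
    (hD_law : P.map D = (volume.restrict (cube d)).map norm) {c K ℓ : ℝ} (hc : d < c) (hK : 0 ≤ K)
    (hℓ : 0 < ℓ) :
    P.real {ω | ℓ < D ω ∧ U ω ≤ K * D ω ^ (-c)} ≤
      K * ∫ x in {x : EuclideanSpace ℝ (Fin d) | ℓ < ‖x‖}, ‖x‖ ^ (-c) := by
  have hint : IntegrableOn (fun x : EuclideanSpace ℝ (Fin d) => ‖x‖ ^ (-c)) {x | ℓ < ‖x‖} :=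
    integrableOn_norm_rpow_neg volume (by simpa using hc) hℓ
  have hmeas : Measurable fun t : ℝ => ENNReal.ofReal (K * t ^ (-c)) := by fun_prop
  refine ENNReal.toReal_le_of_le_ofReal (by positivity) ?_
  calc P {ω | ℓ < D ω ∧ U ω ≤ K * D ω ^ (-c)}
      ≤ ∫⁻ t in Ioi ℓ, ENNReal.ofReal (K * t ^ (-c)) ∂P.map D :=
        measure_mem_and_le_le hD hU hDU hU_unif measurableSet_Ioi (by fun_prop)
    _ = ∫⁻ x in {x | ℓ < ‖x‖}, ENNReal.ofReal (K * ‖x‖ ^ (-c)) ∂volume.restrict (cube d) := by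
        rw [hD_law, setLIntegral_map measurableSet_Ioi hmeas measurable_norm]
        rfl
    _ ≤ ∫⁻ x in {x : EuclideanSpace ℝ (Fin d) | ℓ < ‖x‖}, ENNReal.ofReal (K * ‖x‖ ^ (-c)) :=
        lintegral_mono' (Measure.restrict_mono_measure Measure.restrict_le_self _) le_rfl
    _ = ENNReal.ofReal (K * ∫ x in {x : EuclideanSpace ℝ (Fin d) | ℓ < ‖x‖}, ‖x‖ ^ (-c)) := by
        rw [← integral_const_mul, ofReal_integral_eq_lintegral_ofReal (hint.const_mul K)]
        exact ae_of_all _ fun x => by positivity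

lemma measureReal_mem_Ico_and_le [NeZero d] (hD : Measurable D)
    (hU : Measurable U) (hDU : IndepFun D U P) (hU_unif : P.map U = volume.restrict (Icc 0 1))
    (hD_law : P.map D = (volume.restrict (cube d)).map norm) {a b p : ℝ} (ha : 0 ≤ a)
    (hab : a ≤ b) (hb : b ≤ 1 / 2) (hp : p ∈ Icc (0 : ℝ) 1) :
    P.real {ω | D ω ∈ Ico a b ∧ U ω ≤ p} =
      (b ^ d - a ^ d) * volume.real (Metric.ball (0 : EuclideanSpace ℝ (Fin d)) 1) * p := by
  have ball_subset : Metric.ball (0 : EuclideanSpace ℝ (Fin d)) b ⊆ cube d := by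
    intro x hx i
    have := (PiLp.norm_apply_le x i).trans_lt ((mem_ball_zero_iff.1 hx).trans_le hb)
    exact ⟨(abs_lt.1 this).1, (abs_lt.1 this).2.le⟩
  have annulus : norm ⁻¹' Ico a b ∩ cube d = Metric.ball 0 b \ Metric.ball 0 a := by
    ext x
    simpa [and_comm] using fun _ hx => ball_subset (mem_ball_zero_iff.2 hx)
  have hD_Ico : P.real (D ⁻¹' Ico a b) =
      (b ^ d - a ^ d) * volume.real (Metric.ball (0 : EuclideanSpace ℝ (Fin d)) 1) := by
    rw [← map_measureReal_apply hD measurableSet_Ico, hD_law,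
      map_measureReal_apply measurable_norm measurableSet_Ico,
      measureReal_restrict_apply (measurable_norm measurableSet_Ico), annulus,
      measureReal_ball_diff_ball volume ha hab, finrank_euclideanSpace_fin]
  calc P.real {ω | D ω ∈ Ico a b ∧ U ω ≤ p} = P.real (D ⁻¹' Ico a b ∩ U ⁻¹' Iic p) := rfl
    _ = P.real (D ⁻¹' Ico a b) * P.real (U ⁻¹' Iic p) := by
        rw [measureReal_def, hDU.measure_inter_preimage_eq_mul _ _ measurableSet_Ico
          measurableSet_Iic, ENNReal.toReal_mul]
        rfl
    _ = _ := by rw [hD_Ico, measureReal_preimage_Iic hU hU_unif hp]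

end Threshold

/-! ### Independence -/

section Independence

variable {ι κ β γ : Type*} [MeasurableSpace β] [MeasurableSpace γ]

lemma iIndepFun_curry {X : ι → κ → Ω → β} (hX : ∀ i j, Measurable (X i j))
    (h : iIndepFun (fun p : ι × κ => X p.1 p.2) P) : iIndepFun (fun i ω j => X i j ω) P := by
  have := h.isProbabilityMeasure
  have (i : ι) (j : κ) : IsProbabilityMeasure (P.map (X i j)) :=
    Measure.isProbabilityMeasure_map (hX i j).aemeasurable
  have map_row (i : ι) : P.map (fun ω j => X i j ω) = Measure.infinitePi fun j => P.map (X i j) :=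
    (h.precomp (Prod.mk_right_injective i)).map_fun_eq_infinitePi_map (hX i)
  have map_all : P.map (fun ω p => X p.1 p.2 ω) =
      Measure.infinitePi fun p : ι × κ => P.map (X p.1 p.2) :=
    h.map_fun_eq_infinitePi_map fun p => hX p.1 p.2
  rw [iIndepFun_iff_map_fun_eq_infinitePi_map fun i => measurable_pi_lambda _ (hX i)]
  simp only [map_row]
  rw [← Measure.infinitePi_map_curry (μ := fun i j => P.map (X i j)), ← map_all,
    Measure.map_map (MeasurableEquiv.measurable _) (by fun_prop)]
  rfl

lemma iIndepSet_preimage_inter_preimage {X : ι → Ω → β} {Y : ι → Ω → γ}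
    (hX : ∀ i, Measurable (X i)) (hY : ∀ i, Measurable (Y i)) (hX_indep : iIndepFun X P)
    (hY_indep : iIndepFun Y P) (hXY : IndepFun (fun ω i => X i ω) (fun ω i => Y i ω) P)
    {B : ι → Set β} {C : ι → Set γ} (hB : ∀ i, MeasurableSet (B i))
    (hC : ∀ i, MeasurableSet (C i)) :
    iIndepSet (fun i => X i ⁻¹' B i ∩ Y i ⁻¹' C i) P := by
  have factor (s : Finset ι) : P (⋂ i ∈ s, X i ⁻¹' B i ∩ Y i ⁻¹' C i) =
      P (⋂ i ∈ s, X i ⁻¹' B i) * P (⋂ i ∈ s, Y i ⁻¹' C i) := by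
    have := hXY.measure_inter_preimage_eq_mul (⋂ i ∈ s, Function.eval i ⁻¹' B i)
      (⋂ i ∈ s, Function.eval i ⁻¹' C i)
      (Finset.measurableSet_biInter s fun i _ => measurable_pi_apply i (hB i))
      (Finset.measurableSet_biInter s fun i _ => measurable_pi_apply i (hC i))
    simp only [preimage_iInter] at this
    simp only [iInter_inter_distrib]
    exact this
  refine (iIndepSet_iff_meas_biInter fun i => (hX i (hB i)).inter (hY i (hC i))).2 fun s => ?_
  have single (i : ι) : P (X i ⁻¹' B i ∩ Y i ⁻¹' C i) = P (X i ⁻¹' B i) * P (Y i ⁻¹' C i) := by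
    simpa using factor {i}
  rw [factor, hX_indep.meas_biInter fun i _ => ⟨B i, hB i, rfl⟩,
    hY_indep.meas_biInter fun i _ => ⟨C i, hC i, rfl⟩, ← Finset.prod_mul_distrib]
  simp only [single]

lemma measureReal_biInter_compl_le_exp [IsProbabilityMeasure P] {A : ι → Set Ω}
    (hA : ∀ i, MeasurableSet (A i)) (hA_indep : iIndepSet A P) (s : Finset ι) {q : ℝ}
    (hq : ∀ i ∈ s, q ≤ P.real (A i)) :
    P.real (⋂ i ∈ s, (A i)ᶜ) ≤ Real.exp (-(s.card * q)) := by
  have compl_meas (i : ι) :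
      MeasurableSet[MeasurableSpace.generateFrom {A i}] (A i)ᶜ :=
    (MeasurableSpace.measurableSet_generateFrom (mem_singleton _)).compl
  calc P.real (⋂ i ∈ s, (A i)ᶜ) = ∏ i ∈ s, P.real (A i)ᶜ := by
        rw [measureReal_def, ((iIndepSet_iff_iIndep _ _).1 hA_indep).meas_biInter fun i _ =>
          compl_meas i, ENNReal.toReal_prod]
        rfl
    _ ≤ ∏ _i ∈ s, Real.exp (-q) := by
        refine Finset.prod_le_prod (fun _ _ => measureReal_nonneg) fun i hi => ?_
        rw [probReal_compl_eq_one_sub (hA i)]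
        linarith [hq i hi, Real.one_sub_le_exp_neg q]
    _ = Real.exp (-(s.card * q)) := by
        rw [Finset.prod_const, ← Real.exp_nat_mul, mul_neg]

end Independence

/-! ### Borel–Cantelli along powers of two -/

section BorelCantelli

variable {s : ℕ → Set Ω}

lemma ae_eventually_notMem_of_summable_measureReal [IsFiniteMeasure P]
    (hs : Summable fun n => P.real (s n)) : ∀ᵐ ω ∂P, ∀ᶠ n in atTop, ω ∉ s n :=
  ae_eventually_notMem <| by
    simpa [measureReal_def] using hs.tsum_ofReal_ne_top

lemma ae_eventually_two_pow_notMem [IsFiniteMeasure P] {δ : ℝ} (hδ : 0 < δ)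
    (hs : (fun m => P.real (s m)) =O[atTop] fun m : ℕ => (m : ℝ) ^ (-δ)) :
    ∀ᵐ ω ∂P, ∀ᶠ k : ℕ in atTop, ω ∉ s (2 ^ k) := by
  have hgeom : Summable fun k : ℕ => ((2 : ℝ) ^ (-δ)) ^ k :=
    summable_geometric_of_lt_one (by positivity)
      (Real.rpow_lt_one_of_one_lt_of_neg one_lt_two (neg_neg_of_pos hδ))
  refine ae_eventually_notMem_of_summable_measureReal
    (summable_of_isBigO_nat hgeom ?_)
  have := hs.comp_tendsto (tendsto_pow_atTop_atTop_of_one_lt one_lt_two)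
  simpa [Function.comp_def, Real.rpow_pow_comm] using this

lemma ae_eventually_of_dyadic [IsFiniteMeasure P] {p : ℕ → Ω → Prop} {δ : ℝ} (hδ : 0 < δ)
    (hs : (fun m => P.real (s m)) =O[atTop] fun m : ℕ => (m : ℝ) ^ (-δ))
    (h : ∀ᵐ ω ∂P, ∀ᶠ m in atTop, ω ∉ s m → ∀ n ∈ Icc m (2 * m), p n ω) :
    ∀ᵐ ω ∂P, ∀ᶠ n in atTop, p n ω := by
  have hlog : Tendsto (Nat.log 2) atTop atTop :=
    tendsto_atTop.2 fun k => (eventually_ge_atTop (2 ^ k)).mono fun n hn =>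
      Nat.le_log_of_pow_le one_lt_two hn
  filter_upwards [ae_eventually_two_pow_notMem hδ hs, h] with ω hω hp
  filter_upwards [hlog.eventually hω,
    ((tendsto_pow_atTop_atTop_of_one_lt one_lt_two).comp hlog).eventually hp,
    eventually_ne_atTop 0] with n hn hpn hn0
  refine hpn hn n ⟨Nat.pow_log_le_self 2 hn0, ?_⟩
  have := Nat.lt_pow_succ_log_self one_lt_two n
  rw [pow_succ'] at this
  exact this.le

end BorelCantelli

/-! ### Poisson tails -/

section Poisson

lemma H_pos {x : ℝ} (hx : 0 < x) (hx1 : x ≠ 1) : 0 < H x := by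
  have : Real.log x⁻¹ < x⁻¹ - 1 :=
    Real.log_lt_sub_one_of_pos (inv_pos.2 hx) (by simpa using hx1)
  rw [Real.log_inv] at this
  calc 0 = x * (x⁻¹ - 1) + (x - 1) := by field_simp; ring
    _ < x * (x⁻¹ - 1) + (x - 1) + x * (x⁻¹ - 1 + Real.log x) := by
      exact lt_add_of_pos_right _ (mul_pos hx (by linarith))
    _ = H x := by rw [H]; field_simp; ring

lemma hasSum_poissonMeasure_exp (r : ℝ≥0) (t : ℝ) :
    HasSum (fun n : ℕ => Real.exp (-r) * r ^ n / n.factorial * Real.exp (t * n))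
      (Real.exp (r * (Real.exp t - 1))) := by
  have := (NormedSpace.expSeries_div_hasSum_exp ((r : ℝ) * Real.exp t)).mul_left (Real.exp (-r))
  rw [← Real.exp_eq_exp_ℝ, ← Real.exp_add] at this
  rw [show (r : ℝ) * (Real.exp t - 1) = -r + r * Real.exp t by ring]
  refine this.congr_fun fun n => ?_
  rw [mul_pow, ← Real.exp_nat_mul, mul_comm t]
  ring

lemma integrable_exp_mul_natCast_poissonMeasure (r : ℝ≥0) (t : ℝ) :
    Integrable (fun n : ℕ => Real.exp (t * n)) (poissonMeasure r) := by
  simpa [integrable_poissonMeasure_iff] using (hasSum_poissonMeasure_exp r t).summable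

lemma mgf_natCast_poissonMeasure (r : ℝ≥0) (t : ℝ) :
    mgf (fun n : ℕ => (n : ℝ)) (poissonMeasure r) t = Real.exp (r * (Real.exp t - 1)) := by
  rw [mgf, integral_poissonMeasure]
  exact (hasSum_poissonMeasure_exp r t).tsum_eq

lemma exp_neg_log_mul_mul_exp (r : ℝ) {a : ℝ} (ha : 0 < a) :
    Real.exp (-Real.log a * (a * r)) * Real.exp (r * (Real.exp (Real.log a) - 1)) =
      Real.exp (-(r * H a)) := by
  rw [Real.exp_log ha, ← Real.exp_add, H]
  ring_nf

lemma poissonMeasure_real_mul_le_le (r : ℝ≥0) {a : ℝ} (ha : 1 ≤ a) :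
    (poissonMeasure r).real {n : ℕ | a * r ≤ n} ≤ Real.exp (-(r * H a)) := by
  rw [← exp_neg_log_mul_mul_exp r (by linarith), ← mgf_natCast_poissonMeasure]
  exact measure_ge_le_exp_mul_mgf _ (Real.log_nonneg ha)
    (integrable_exp_mul_natCast_poissonMeasure r _)

lemma poissonMeasure_real_le_mul_le (r : ℝ≥0) {a : ℝ} (ha : 0 < a) (ha1 : a ≤ 1) :
    (poissonMeasure r).real {n : ℕ | (n : ℝ) ≤ a * r} ≤ Real.exp (-(r * H a)) := by
  rw [← exp_neg_log_mul_mul_exp r ha, ← mgf_natCast_poissonMeasure]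
  exact measure_le_le_exp_mul_mgf _ (Real.log_nonpos ha.le ha1)
    (integrable_exp_mul_natCast_poissonMeasure r _)

lemma hasLaw_N (M : Model d P) (n : ℕ) : HasLaw (M.N n) (poissonMeasure n) P where
  aemeasurable := (M.N_meas n).aemeasurable
  map_eq := by
    refine Measure.ext_of_singleton fun k => ?_
    rw [Measure.map_apply (M.N_meas n) (measurableSet_singleton k), poissonMeasure_singleton,
      NNReal.coe_natCast]
    exact M.N_poisson n k

lemma summable_exp_neg_natCast_mul {h : ℝ} (hh : 0 < h) :
    Summable fun n : ℕ => Real.exp (-(n * h)) := by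
  simpa using Real.summable_exp_nat_mul_iff.2 (neg_neg_of_pos hh)

lemma ae_eventually_N_le_mul (M : Model d P) [IsProbabilityMeasure P] {a : ℝ} (ha : 1 < a) :
    ∀ᵐ ω ∂P, ∀ᶠ n in atTop, (M.N n ω : ℝ) ≤ a * n := by
  have hsum : Summable fun n : ℕ => P.real {ω | a * n ≤ M.N n ω} := by
    refine .of_nonneg_of_le (fun _ => measureReal_nonneg) (fun n => ?_)
      (summable_exp_neg_natCast_mul (H_pos (by linarith) ha.ne'))
    rw [(hasLaw_N M n).measureReal_eq (p := fun k => a * n ≤ k) .of_discrete]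
    exact poissonMeasure_real_mul_le_le n ha.le
  filter_upwards [ae_eventually_notMem_of_summable_measureReal hsum] with ω hω
  exact hω.mono fun n hn => (not_le.1 hn).le

lemma ae_eventually_mul_le_N (M : Model d P) [IsProbabilityMeasure P] {a : ℝ} (ha : 0 < a)
    (ha1 : a < 1) : ∀ᵐ ω ∂P, ∀ᶠ n in atTop, a * n ≤ (M.N n ω : ℝ) := by
  have hsum : Summable fun n : ℕ => P.real {ω | (M.N n ω : ℝ) ≤ a * n} := by
    refine .of_nonneg_of_le (fun _ => measureReal_nonneg) (fun n => ?_)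
      (summable_exp_neg_natCast_mul (H_pos ha ha1.ne))
    rw [(hasLaw_N M n).measureReal_eq (p := fun k : ℕ => (k : ℝ) ≤ a * n) .of_discrete]
    exact poissonMeasure_real_le_mul_le n ha ha1.le
  filter_upwards [ae_eventually_notMem_of_summable_measureReal hsum] with ω hω
  exact hω.mono fun n hn => (not_le.1 hn).le

end Poisson

/-! ### The connection radius and the longest edge -/

section Radius

variable (M : Model d P) {γ : ℝ}

lemma rhat_pos (hγ : 0 < γ) {n : ℕ} (hn : 2 ≤ n) : 0 < rhat M γ n := by
  have := Real.log_pos (Nat.one_lt_cast.2 hn)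
  have := M.α_pos
  have : (0 : ℝ) < n := by positivity
  unfold rhat
  positivity

lemma rhat_pow [NeZero d] (hγ : 0 ≤ γ) (n : ℕ) :
    rhat M γ n ^ d = γ * Real.log n / (M.α * n) := by
  have := M.α_pos
  have := Real.log_natCast_nonneg n
  rw [rhat, one_div, Real.rpow_inv_natCast_pow (by positivity) (NeZero.ne d)]

lemma rhat_le_rhat (hγ : 0 ≤ γ) {m n : ℕ} (hm : 3 ≤ m) (hmn : m ≤ n) :
    rhat M γ n ≤ rhat M γ m := by
  have hα := M.α_pos
  have exp_le {k : ℕ} (hk : 3 ≤ k) : (k : ℝ) ∈ {x | Real.exp 1 ≤ x} :=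
    Real.exp_one_lt_three.le.trans (by exact_mod_cast hk)
  have hlog : Real.log n / n ≤ Real.log m / m :=
    Real.log_div_self_antitoneOn (exp_le hm) (exp_le (hm.trans hmn)) (by exact_mod_cast hmn)
  have := Real.log_natCast_nonneg n
  simp only [rhat, mul_div_mul_comm]
  gcongr

lemma rhat_eq_mul_rpow (hγ : 0 ≤ γ) (n : ℕ) :
    rhat M γ n = (γ / M.α * Real.log n) ^ ((1 : ℝ) / d) * (n : ℝ) ^ (-((1 : ℝ) / d)) := by
  have hα := M.α_pos
  have := Real.log_natCast_nonneg n
  rw [Real.rpow_neg (by positivity), ← Real.inv_rpow (by positivity),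
    ← Real.mul_rpow (by positivity) (by positivity), rhat]
  congr 1
  ring

lemma eventually_mul_rpow_neg_le_rhat [NeZero d] (hγ : 0 < γ) (a : ℝ) :
    ∀ᶠ n : ℕ in atTop, a * (n : ℝ) ^ (-((1 : ℝ) / d)) ≤ rhat M γ n := by
  have hd : 0 < (1 : ℝ) / d := by have := NeZero.pos d; positivity
  have : Tendsto (fun n : ℕ => (γ / M.α * Real.log n) ^ ((1 : ℝ) / d)) atTop atTop :=
    (tendsto_rpow_atTop hd).comp <|
      (Real.tendsto_log_atTop.comp tendsto_natCast_atTop_atTop).const_mul_atTop (div_pos hγ M.α_pos)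
  filter_upwards [this.eventually_ge_atTop a] with n hn
  rw [rhat_eq_mul_rpow M hγ.le]
  gcongr

lemma isBigO_rhat_rpow_neg (hγ : 0 ≤ γ) {τ : ℝ} (hτ : τ < 1 / d) :
    rhat M γ =O[atTop] fun n : ℕ => (n : ℝ) ^ (-τ) := by
  have hlog : (fun n : ℕ => (γ / M.α * Real.log n) ^ ((1 : ℝ) / d)) =O[atTop]
      fun n : ℕ => (n : ℝ) ^ (1 / d - τ) := by
    have := ((isLittleO_log_rpow_rpow_atTop (1 / d) (sub_pos.2 hτ)).isBigO.comp_tendsto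
      tendsto_natCast_atTop_atTop).const_mul_left ((γ / M.α) ^ ((1 : ℝ) / d))
    refine this.congr_left fun n => ?_
    have hα := M.α_pos
    exact (Real.mul_rpow (by positivity) (Real.log_natCast_nonneg n)).symm
  have := hlog.mul (Asymptotics.isBigO_refl (fun n : ℕ => (n : ℝ) ^ (-((1 : ℝ) / d))) atTop)
  refine (this.congr_left fun n => (rhat_eq_mul_rpow M hγ n).symm).congr' .rfl ?_
  filter_upwards [eventually_gt_atTop 0] with n hn
  rw [← Real.rpow_add (by exact_mod_cast hn)]
  ring_nf

lemma tendsto_rhat [NeZero d] (hγ : 0 ≤ γ) : Tendsto (rhat M γ) atTop (nhds 0) := by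
  have hd : 0 < (1 : ℝ) / d := by have := NeZero.pos d; positivity
  exact (isBigO_rhat_rpow_neg M hγ (half_lt_self hd)).trans_tendsto <|
    (tendsto_rpow_neg_atTop (half_pos hd)).comp tendsto_natCast_atTop_atTop

end Radius

section Connection

variable (M : Model d P)

lemma exists_g_le_mul_rpow_neg {c : ℝ} (hc : 0 ≤ c)
    (hg : M.g =O[atTop] fun r : ℝ => r ^ (-c)) :
    ∃ K, 0 ≤ K ∧ ∀ s, 0 < s → M.g s ≤ K * s ^ (-c) := by
  obtain ⟨C, hC⟩ := hg.bound
  obtain ⟨s₀, hs₀⟩ := eventually_atTop.1 hC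
  refine ⟨max C (|s₀| ^ c), (by positivity : 0 ≤ |s₀| ^ c).trans (le_max_right _ _),
    fun s hs => ?_⟩
  have hs' : 0 < s ^ (-c) := by positivity
  rcases le_total s₀ s with h | h
  · calc M.g s ≤ ‖M.g s‖ := Real.le_norm_self _
      _ ≤ C * s ^ (-c) := by simpa [abs_of_pos hs'] using hs₀ s h
      _ ≤ _ := by gcongr; exact le_max_left _ _
  · calc M.g s ≤ 1 := (M.g_mem s hs.le).2
      _ = s ^ c * s ^ (-c) := by rw [← Real.rpow_add hs, add_neg_cancel, Real.rpow_zero]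
      _ ≤ |s₀| ^ c * s ^ (-c) := by gcongr; exact h.trans (le_abs_self _)
      _ ≤ _ := by gcongr; exact le_max_right _ _

lemma exists_g_pos [NeZero d] : ∃ s, 0 < s ∧ 0 < M.g s := by
  by_contra! hg
  have : (fun x : EuclideanSpace ℝ (Fin d) => M.g ‖x‖) =ᵐ[volume] 0 := by
    filter_upwards [compl_mem_ae_iff.2 (measure_singleton (0 : EuclideanSpace ℝ (Fin d)))]
      with x hx
    exact le_antisymm (hg _ (norm_pos_iff.2 hx)) (M.g_mem _ (norm_nonneg x)).1
  exact M.α_pos.ne' (by rw [M.α_def, integral_congr_ae this]; simp)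

end Connection

section LongestEdge

variable (M : Model d P) {n : ℕ} {r : ℝ} {ω : Ω}

lemma bddAbove_edgeLengths :
    BddAbove ({0} ∪ {t | ∃ i j, adj M n r ω i j ∧ t = torusDist (M.X i ω) (M.X j ω)}) := by
  refine ((Set.finite_singleton 0).union <| (((finite_Iic (M.N n ω)).prod
    (finite_Iic (M.N n ω))).image fun p => torusDist (M.X p.1 ω) (M.X p.2 ω)).subset ?_).bddAbove
  rintro _ ⟨i, j, ⟨-, -, -, hi, hj, -⟩, rfl⟩
  exact ⟨(i, j), ⟨hi, hj⟩, rfl⟩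

variable {M}

lemma torusDist_le_longestEdge {i j : ℕ} (h : adj M n r ω i j) :
    torusDist (M.X i ω) (M.X j ω) ≤ longestEdge M n r ω :=
  le_csSup (bddAbove_edgeLengths M) (Or.inr ⟨i, j, h, rfl⟩)

lemma longestEdge_le {ℓ : ℝ} (hℓ : 0 ≤ ℓ)
    (h : ∀ i j, adj M n r ω i j → torusDist (M.X i ω) (M.X j ω) ≤ ℓ) :
    longestEdge M n r ω ≤ ℓ := by
  refine csSup_le ⟨0, Or.inl rfl⟩ ?_
  rintro _ (rfl | ⟨i, j, hij, rfl⟩)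
  exacts [hℓ, h i j hij]

end LongestEdge

/-! ### Pairs of points -/

/-- The toroidal distance between the points `X_i` and `X_j`. -/
def pairDist (M : Model d P) (i j : ℕ) (ω : Ω) : ℝ :=
  torusDist (M.X i ω) (M.X j ω)

/-- The uniform variable deciding whether `i` and `j` are joined; it is symmetric in `i` and `j`. -/
def mark (M : Model d P) (i j : ℕ) (ω : Ω) : ℝ :=
  M.U (min i j) (max i j) ω

section Pairs

variable (M : Model d P)

lemma measurable_pairDist (i j : ℕ) : Measurable (pairDist M i j) :=
  measurable_torusDist_prodMk (M.X_meas i) (M.X_meas j)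

lemma measurable_mark (i j : ℕ) : Measurable (mark M i j) := M.U_meas _ _

lemma indepFun_X_U :
    IndepFun (fun ω i => M.X i ω) (fun ω (p : ℕ × ℕ) => M.U p.1 p.2 ω) P :=
  (IndepFun_iff_Indep _ _ _).2 (M.families_indep.indep (i := 0) (j := 2) (by decide))

lemma indepFun_pairDist_mark (i j : ℕ) : IndepFun (pairDist M i j) (mark M i j) P :=
  (indepFun_X_U M).comp
    (measurable_torusDist_prodMk (measurable_pi_apply i) (measurable_pi_apply j))
    (measurable_pi_apply (min i j, max i j))

lemma map_pairDist [IsProbabilityMeasure P] {i j : ℕ} (hi : 1 ≤ i) (hj : 1 ≤ j) (hij : i ≠ j) :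
    P.map (pairDist M i j) = (volume.restrict (cube d)).map norm :=
  map_torusDist_of_indepFun (M.X_meas i) (M.X_meas j)
    (M.X_indep.indepFun (i := ⟨i, hi⟩) (j := ⟨j, hj⟩) (by simpa using hij)) (M.X_unif j hj)

lemma map_mark {i j : ℕ} (hi : 1 ≤ i) (hj : 1 ≤ j) (hij : i ≠ j) :
    P.map (mark M i j) = volume.restrict (Icc 0 1) :=
  M.U_unif _ _ (le_min hi hj) (min_lt_max.2 hij)

lemma iIndepFun_pairDist : iIndepFun (fun l => pairDist M (2 * l + 1) (2 * l + 2)) P := by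
  have index_injective : Function.Injective fun p : ℕ × Fin 2 =>
      (⟨2 * p.1 + p.2 + 1, by omega⟩ : {i : ℕ // 1 ≤ i}) := fun p q hpq => by
    have : 2 * p.1 + p.2 + 1 = 2 * q.1 + q.2 + 1 := congrArg Subtype.val hpq
    ext <;> omega
  have pairs_indep : iIndepFun (fun l ω (e : Fin 2) => M.X (2 * l + e + 1) ω) P :=
    iIndepFun_curry (fun _ _ => M.X_meas _) (M.X_indep.precomp index_injective)
  exact pairs_indep.comp (fun _ x => torusDist (x 0) (x 1)) fun _ =>
    measurable_torusDist_prodMk (measurable_pi_apply 0) (measurable_pi_apply 1)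

lemma iIndepFun_mark : iIndepFun (fun l => mark M (2 * l + 1) (2 * l + 2)) P := by
  have index_injective : Function.Injective fun l : ℕ =>
      (⟨(min (2 * l + 1) (2 * l + 2), max (2 * l + 1) (2 * l + 2)), by simp⟩ :
        {p : ℕ × ℕ // 1 ≤ p.1 ∧ p.1 < p.2}) := fun k l hkl => by
    simpa using congrArg (fun p => p.1.1) hkl
  exact M.U_indep.precomp index_injective

end Pairs

/-! ### Upper bound -/

section UpperBound

/-- The event that some edge between the points `X_1, …, X_k`, with connection range `r`, is longer
than `ℓ`. Taking a fixed `k` in place of `N_n` makes this event independent of the counts. -/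
def longEdgeEvent (M : Model d P) (k : ℕ) (r ℓ : ℝ) : Set Ω :=
  ⋃ p ∈ (Finset.Icc 1 k).offDiag,
    {ω | ℓ < pairDist M p.1 p.2 ω ∧ mark M p.1 p.2 ω ≤ M.g (pairDist M p.1 p.2 ω / r)}

variable (M : Model d P)

lemma g_div_le_g_div {r r' t : ℝ} (hr : 0 < r) (hrr' : r ≤ r') (ht : 0 ≤ t) :
    M.g (t / r) ≤ M.g (t / r') :=
  M.g_antitone (div_nonneg ht (hr.le.trans hrr')) (div_nonneg ht hr.le) (by gcongr)

lemma longestEdge_le_of_notMem_longEdgeEvent {n k : ℕ} {r r' ℓ : ℝ} {ω : Ω} (hr : 0 < r)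
    (hrr' : r ≤ r') (hℓ : 0 ≤ ℓ) (hk : M.N n ω ≤ k) (hω : ω ∉ longEdgeEvent M k r' ℓ) :
    longestEdge M n r ω ≤ ℓ := by
  refine longestEdge_le hℓ fun i j ⟨hij, hi, hj, hiN, hjN, hU⟩ => ?_
  by_contra! hlt
  refine hω (mem_biUnion (x := (i, j)) ?_ ⟨hlt, hU.trans ?_⟩)
  · simp only [Finset.mem_coe, Finset.mem_offDiag, Finset.mem_Icc]
    exact ⟨⟨hi, hiN.trans hk⟩, ⟨hj, hjN.trans hk⟩, hij⟩
  · exact g_div_le_g_div M hr hrr' (torusDist_nonneg _ _)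

variable [IsProbabilityMeasure P] [NeZero d] {c : ℝ}

lemma exists_measureReal_longEdge_le (hc : d < c)
    (hg : M.g =O[atTop] fun r : ℝ => r ^ (-c)) :
    ∃ C, 0 ≤ C ∧ ∀ i j, 1 ≤ i → 1 ≤ j → i ≠ j → ∀ r ℓ : ℝ, 0 < r → 0 < ℓ →
      P.real {ω | ℓ < pairDist M i j ω ∧ mark M i j ω ≤ M.g (pairDist M i j ω / r)} ≤
        C * (r ^ c * ℓ ^ (d - c)) := by
  obtain ⟨K, hK, hgK⟩ := exists_g_le_mul_rpow_neg M ((Nat.cast_nonneg d).trans hc.le) hg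
  have := sub_pos.2 hc
  refine ⟨K * (d * volume.real (Metric.ball (0 : EuclideanSpace ℝ (Fin d)) 1) / (c - d)),
    by positivity, fun i j hi hj hij r ℓ hr hℓ => ?_⟩
  calc P.real {ω | ℓ < pairDist M i j ω ∧ mark M i j ω ≤ M.g (pairDist M i j ω / r)}
      ≤ P.real {ω | ℓ < pairDist M i j ω ∧ mark M i j ω ≤ K * r ^ c * pairDist M i j ω ^ (-c)} := by
        refine measureReal_mono fun ω ⟨hD, hU⟩ => ⟨hD, hU.trans ?_⟩
        refine (hgK _ (div_pos (hℓ.trans hD) hr)).trans_eq ?_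
        rw [Real.div_rpow (hℓ.trans hD).le hr.le, Real.rpow_neg hr.le c]
        field_simp
    _ ≤ K * r ^ c * ∫ x in {x : EuclideanSpace ℝ (Fin d) | ℓ < ‖x‖}, ‖x‖ ^ (-c) :=
        measureReal_lt_and_le_mul_rpow_le (measurable_pairDist M i j) (measurable_mark M i j)
          (indepFun_pairDist_mark M i j) (map_mark M hi hj hij) (map_pairDist M hi hj hij) hc
          (by positivity) hℓ
    _ = _ := by
        rw [setIntegral_norm_rpow_neg volume (by simpa using hc) hℓ, finrank_euclideanSpace_fin]
        ring

lemma exists_measureReal_longEdgeEvent_le (hc : d < c)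
    (hg : M.g =O[atTop] fun r : ℝ => r ^ (-c)) :
    ∃ C, ∀ (k : ℕ) (r ℓ : ℝ), 0 < r → 0 < ℓ →
      P.real (longEdgeEvent M k r ℓ) ≤ C * (k ^ 2 * r ^ c * ℓ ^ (d - c)) := by
  obtain ⟨C, hC, hedge⟩ := exists_measureReal_longEdge_le M hc hg
  refine ⟨C, fun k r ℓ hr hℓ => ?_⟩
  have card_le : (((Finset.Icc 1 k).offDiag.card : ℕ) : ℝ) ≤ k ^ 2 := by
    rw [Finset.offDiag_card, Nat.card_Icc, Nat.add_sub_cancel, sq]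
    exact_mod_cast Nat.sub_le _ _
  calc P.real (longEdgeEvent M k r ℓ)
      ≤ ∑ _p ∈ (Finset.Icc 1 k).offDiag, C * (r ^ c * ℓ ^ (d - c)) := by
        refine (measureReal_biUnion_finset_le _ _).trans (Finset.sum_le_sum fun p hp => ?_)
        simp only [Finset.mem_offDiag, Finset.mem_Icc] at hp
        exact hedge _ _ hp.1.1 hp.2.1.1 hp.2.2 _ _ hr hℓ
    _ ≤ k ^ 2 * (C * (r ^ c * ℓ ^ (d - c))) := by
        rw [Finset.sum_const, nsmul_eq_mul]
        gcongr
    _ = _ := by ring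

lemma isBigO_measureReal_longEdgeEvent (hc : d < c) (hg : M.g =O[atTop] fun r : ℝ => r ^ (-c))
    {γ : ℝ} (hγ : 0 < γ) {a b τ : ℝ} (ha : 0 < a) (hτ : τ < 1 / d) :
    (fun m : ℕ => P.real (longEdgeEvent M (4 * m) (rhat M γ m) (a * (m : ℝ) ^ (-b)))) =O[atTop]
      fun m : ℕ => (m : ℝ) ^ (-(τ * c - 2 - b * (c - d))) := by
  have hc0 : 0 ≤ c := (Nat.cast_nonneg d).trans hc.le
  obtain ⟨C, hlong⟩ := exists_measureReal_longEdgeEvent_le M hc hg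
  have hr : (fun m => rhat M γ m ^ c) =O[atTop] fun m : ℕ => ((m : ℝ) ^ (-τ)) ^ c :=
    (isBigO_rhat_rpow_neg M hγ.le hτ).rpow hc0 (.of_forall fun m => by positivity)
  have hpow : (fun m : ℕ => C * 16 * a ^ (d - c) * ((m : ℝ) ^ 2 * (m : ℝ) ^ (-b * (d - c))))
      =O[atTop] fun m : ℕ => (m : ℝ) ^ 2 * (m : ℝ) ^ (-b * (d - c)) :=
    Asymptotics.isBigO_const_mul_self _ _ _
  refine (Asymptotics.IsBigO.of_norm_eventuallyLE ?_).trans ((hpow.mul hr).congr' .rfl ?_)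
  · filter_upwards [eventually_ge_atTop 2] with m hm
    have hm0 : (0 : ℝ) < m := by positivity
    rw [Real.norm_of_nonneg measureReal_nonneg]
    refine (hlong _ _ _ (rhat_pos M hγ hm) (by positivity)).trans_eq ?_
    rw [Real.mul_rpow ha.le (by positivity), ← Real.rpow_mul hm0.le]
    push_cast
    ring
  · filter_upwards [eventually_gt_atTop 0] with m hm
    have hm0 : (0 : ℝ) < m := by exact_mod_cast hm
    rw [← Real.rpow_mul hm0.le, ← Real.rpow_natCast, ← Real.rpow_add hm0, ← Real.rpow_add hm0]
    push_cast
    ring_nf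

lemma two_rpow_neg_abs_mul_rpow_neg_le {m n : ℝ} (b : ℝ) (hm : 0 < m) (hmn : m ≤ n)
    (hnm : n ≤ 2 * m) : (2 : ℝ) ^ (-|b|) * m ^ (-b) ≤ n ^ (-b) := by
  have hn : 0 < n := hm.trans_le hmn
  rcases le_total 0 b with hb | hb
  · calc (2 : ℝ) ^ (-|b|) * m ^ (-b) = (2 * m) ^ (-b) := by
          rw [abs_of_nonneg hb, Real.mul_rpow two_pos.le hm.le]
      _ ≤ n ^ (-b) := Real.rpow_le_rpow_of_nonpos hn hnm (neg_nonpos.2 hb)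
  · calc (2 : ℝ) ^ (-|b|) * m ^ (-b) ≤ 1 * m ^ (-b) := by
          gcongr
          exact Real.rpow_le_one_of_one_le_of_nonpos one_le_two (neg_nonpos.2 (abs_nonneg b))
      _ ≤ n ^ (-b) := by
          rw [one_mul]
          exact Real.rpow_le_rpow hm.le hmn (neg_nonneg.2 hb)

theorem ae_eventually_longestEdge_le_rpow_neg (hc : d < c)
    (hg : M.g =O[atTop] fun r : ℝ => r ^ (-c)) {γ : ℝ} (hγ : 0 < γ) {b : ℝ}
    (hb : b * (c - d) < c / d - 2) :
    ∀ᵐ ω ∂P, ∀ᶠ n : ℕ in atTop, longestEdge M n (rhat M γ n) ω ≤ (n : ℝ) ^ (-b) := by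
  have hc0 : 0 < c := (Nat.cast_nonneg d).trans_lt hc
  obtain ⟨τ, hτ, hτd⟩ : ∃ τ, (2 + b * (c - d)) / c < τ ∧ τ < 1 / d := by
    refine exists_between ?_
    rw [div_lt_iff₀ hc0, one_div_mul_eq_div]
    linarith
  rw [div_lt_iff₀ hc0] at hτ
  refine ae_eventually_of_dyadic (sub_pos.2 (by linarith : b * (c - d) < τ * c - 2))
    (isBigO_measureReal_longEdgeEvent M hc hg hγ (b := b)
      (by positivity : (0 : ℝ) < 2 ^ (-|b|)) hτd) ?_
  filter_upwards [ae_eventually_N_le_mul M one_lt_two] with ω hN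
  filter_upwards [(tendsto_id.const_mul_atTop' two_pos).eventually hN, eventually_ge_atTop 3]
    with m hNm hm hω n ⟨hmn, hnm⟩
  have hm0 : (0 : ℝ) < m := by positivity
  have hNn : M.N n ω ≤ 4 * m := by
    refine (M.N_mono ω hnm).trans ?_
    have : (M.N (2 * m) ω : ℝ) ≤ (4 * m : ℕ) := hNm.trans_eq (by simp only [id]; push_cast; ring)
    exact_mod_cast this
  calc longestEdge M n (rhat M γ n) ω ≤ 2 ^ (-|b|) * (m : ℝ) ^ (-b) :=
        longestEdge_le_of_notMem_longEdgeEvent M (rhat_pos M hγ (by omega))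
          (rhat_le_rhat M hγ.le hm hmn) (by positivity) hNn hω
    _ ≤ (n : ℝ) ^ (-b) := two_rpow_neg_abs_mul_rpow_neg_le b hm0 (by exact_mod_cast hmn)
        (by exact_mod_cast hnm)

end UpperBound

/-! ### Lower bound -/

section LowerBound

variable (M : Model d P)

/-- The event that the points `X_{2l+1}` and `X_{2l+2}` are at distance between `t / 2` and `t` and
their mark is at most `p`. These events use disjoint sets of points, hence are independent. -/
def pairEvent (t p : ℝ) (l : ℕ) : Set Ω :=
  {ω | pairDist M (2 * l + 1) (2 * l + 2) ω ∈ Ico (t / 2) t ∧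
    mark M (2 * l + 1) (2 * l + 2) ω ≤ p}

lemma half_le_longestEdge_of_mem_pairEvent {n l : ℕ} {r t s : ℝ} {ω : Ω} (hr : 0 < r)
    (hl : 2 * l + 2 ≤ M.N n ω) (hs : t / r ≤ s) (hω : ω ∈ pairEvent M t (M.g s) l) :
    t / 2 ≤ longestEdge M n r ω := by
  obtain ⟨⟨ht, hDt⟩, hU⟩ := hω
  have hD : 0 ≤ pairDist M (2 * l + 1) (2 * l + 2) ω / r := div_nonneg (torusDist_nonneg _ _) hr.le
  have hDs : pairDist M (2 * l + 1) (2 * l + 2) ω / r ≤ s := le_trans (by gcongr) hs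
  exact ht.trans (torusDist_le_longestEdge ⟨by omega, by omega, by omega, by omega, hl,
    hU.trans (M.g_antitone hD (hD.trans hDs) hDs)⟩)

lemma measurableSet_pairEvent (t p : ℝ) (l : ℕ) : MeasurableSet (pairEvent M t p l) :=
  (measurable_pairDist M _ _ measurableSet_Ico).inter (measurable_mark M _ _ measurableSet_Iic)

lemma iIndepSet_pairEvent (t p : ℝ) : iIndepSet (pairEvent M t p) P := by
  refine iIndepSet_preimage_inter_preimage (fun l => measurable_pairDist M _ _)
    (fun l => measurable_mark M _ _) (iIndepFun_pairDist M) (iIndepFun_mark M) ?_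
    (fun _ => measurableSet_Ico) (fun _ => measurableSet_Iic)
  exact (indepFun_X_U M).comp
    (measurable_pi_lambda _ fun l : ℕ => measurable_torusDist_prodMk
      (measurable_pi_apply (2 * l + 1)) (measurable_pi_apply (2 * l + 2)))
    (measurable_pi_lambda _ fun l : ℕ =>
      measurable_pi_apply (min (2 * l + 1) (2 * l + 2), max (2 * l + 1) (2 * l + 2)))

variable [IsProbabilityMeasure P] [NeZero d]

lemma exists_measureReal_pairEvent_eq :
    ∃ A, 0 < A ∧ ∀ t p : ℝ, 0 ≤ t → t ≤ 1 / 2 → p ∈ Icc 0 1 → ∀ l,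
      P.real (pairEvent M t p l) = A * (t ^ d * p) := by
  have hpow : (2⁻¹ : ℝ) ^ d < 1 := pow_lt_one₀ (by norm_num) (by norm_num) (NeZero.ne d)
  have hball : 0 < volume.real (Metric.ball (0 : EuclideanSpace ℝ (Fin d)) 1) :=
    ENNReal.toReal_pos (Metric.measure_ball_pos _ _ one_pos).ne' measure_ball_lt_top.ne
  refine ⟨_, mul_pos (sub_pos.2 hpow) hball, fun t p ht ht' hp l => ?_⟩
  refine (measureReal_mem_Ico_and_le (measurable_pairDist M _ _) (measurable_mark M _ _)
    (indepFun_pairDist_mark M _ _) (map_mark M (by omega) (by omega) (by omega))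
    (map_pairDist M (by omega) (by omega) (by omega)) (by positivity) (half_le_self ht) ht'
    hp).trans ?_
  rw [div_eq_mul_inv, mul_pow]
  ring

lemma exists_measureReal_biInter_compl_pairEvent_le :
    ∃ A, 0 < A ∧ ∀ t p : ℝ, 0 ≤ t → t ≤ 1 / 2 → p ∈ Icc 0 1 → ∀ k : ℕ,
      P.real (⋂ l ∈ Finset.range k, (pairEvent M t p l)ᶜ) ≤
        Real.exp (-(k * (A * (t ^ d * p)))) := by
  obtain ⟨A, hA, hpair⟩ := exists_measureReal_pairEvent_eq M
  refine ⟨A, hA, fun t p ht ht' hp k => ?_⟩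
  have := measureReal_biInter_compl_le_exp (measurableSet_pairEvent M t p)
    (iIndepSet_pairEvent M t p) (Finset.range k) fun l _ => (hpair t p ht ht' hp l).ge
  rwa [Finset.card_range] at this

lemma exists_isBigO_measureReal_biInter_compl_pairEvent {γ s : ℝ} (hγ : 0 < γ) (hs : 0 < s)
    (hgs : 0 < M.g s) :
    ∃ δ : ℝ, 0 < δ ∧ (fun m : ℕ => P.real (⋂ l ∈ Finset.range (m / 4),
      (pairEvent M (s * rhat M γ (2 * m)) (M.g s) l)ᶜ)) =O[atTop] fun m : ℕ => (m : ℝ) ^ (-δ) := by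
  have hα := M.α_pos
  obtain ⟨A, hA, hpairs⟩ := exists_measureReal_biInter_compl_pairEvent_le M
  have hradius : ∀ᶠ m : ℕ in atTop, s * rhat M γ (2 * m) ≤ 1 / 2 := by
    have := ((tendsto_rhat M hγ.le).comp (tendsto_id.const_mul_atTop' two_pos)).const_mul s
    rw [mul_zero] at this
    exact this.eventually_le_const one_half_pos
  refine ⟨A * (s ^ d * γ * M.g s) / (16 * M.α), by positivity, .of_norm_eventuallyLE ?_⟩
  filter_upwards [hradius, eventually_ge_atTop 4] with m hm hm4
  have hm0 : (0 : ℝ) < m := by positivity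
  have hr := rhat_pos M hγ (by omega : 2 ≤ 2 * m)
  have hlog : Real.log m ≤ Real.log (2 * m : ℕ) :=
    Real.log_le_log hm0 (by exact_mod_cast (by omega : m ≤ 2 * m))
  have hquarter : (m : ℝ) / 8 ≤ (m / 4 : ℕ) := by
    rw [div_le_iff₀ (by norm_num)]
    exact_mod_cast (by omega : m ≤ m / 4 * 8)
  have := Real.log_natCast_nonneg m
  rw [Real.norm_of_nonneg measureReal_nonneg, Real.rpow_def_of_pos hm0]
  refine (hpairs _ _ (by positivity) hm (M.g_mem s hs.le) _).trans (Real.exp_le_exp.2 ?_)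
  rw [mul_neg, neg_le_neg_iff, mul_pow, rhat_pow M hγ.le]
  calc Real.log m * (A * (s ^ d * γ * M.g s) / (16 * M.α))
      = m / 8 * (A * (s ^ d * (γ * Real.log m / (M.α * (2 * m : ℕ))) * M.g s)) := by
        push_cast
        field_simp
        ring
    _ ≤ (m / 4 : ℕ) *
          (A * (s ^ d * (γ * Real.log (2 * m : ℕ) / (M.α * (2 * m : ℕ))) * M.g s)) := by
        gcongr

theorem ae_eventually_rpow_neg_le_longestEdge {γ : ℝ} (hγ : 0 < γ) :
    ∀ᵐ ω ∂P, ∀ᶠ n : ℕ in atTop,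
      (n : ℝ) ^ (-((1 : ℝ) / d)) ≤ longestEdge M n (rhat M γ n) ω := by
  obtain ⟨s, hs, hgs⟩ := exists_g_pos M
  obtain ⟨δ, hδ, hbigO⟩ := exists_isBigO_measureReal_biInter_compl_pairEvent M hγ hs hgs
  have hradius := (tendsto_id.const_mul_atTop' two_pos).eventually
    (eventually_mul_rpow_neg_le_rhat M hγ (2 / s * 2 ^ ((1 : ℝ) / d)))
  refine ae_eventually_of_dyadic hδ hbigO ?_
  filter_upwards [ae_eventually_mul_le_N M one_half_pos one_half_lt_one] with ω hN
  filter_upwards [hN, hradius, eventually_ge_atTop 3] with m hNm hrm hm hω n ⟨hmn, hnm⟩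
  obtain ⟨l, hl, hlω⟩ : ∃ l < m / 4, ω ∈ pairEvent M (s * rhat M γ (2 * m)) (M.g s) l := by
    simpa using hω
  have hm0 : (0 : ℝ) < m := by positivity
  have hn := rhat_pos M hγ (by omega : 2 ≤ n)
  have hlN : 2 * l + 2 ≤ M.N n ω := by
    have : m ≤ 2 * M.N m ω := by
      rw [one_div, inv_mul_le_iff₀ two_pos] at hNm
      exact_mod_cast hNm
    have := M.N_mono ω hmn
    dsimp only at this
    omega
  calc (n : ℝ) ^ (-((1 : ℝ) / d)) ≤ (m : ℝ) ^ (-((1 : ℝ) / d)) :=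
        Real.rpow_le_rpow_of_nonpos hm0 (by exact_mod_cast hmn) (by simp)
    _ = s / 2 * (2 / s * 2 ^ ((1 : ℝ) / d) * ((2 * m : ℕ) : ℝ) ^ (-((1 : ℝ) / d))) := by
        push_cast
        rw [Real.mul_rpow two_pos.le hm0.le, Real.rpow_neg two_pos.le]
        field_simp
    _ ≤ s / 2 * rhat M γ (2 * m) := by gcongr; exact hrm
    _ = s * rhat M γ (2 * m) / 2 := by ring
    _ ≤ longestEdge M n (rhat M γ n) ω := by
        refine half_le_longestEdge_of_mem_pairEvent M hn hlN ?_ hlω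
        rw [div_le_iff₀ hn]
        gcongr
        exact rhat_le_rhat M hγ.le (by omega) hnm

end LowerBound

/-! ### Logarithmic rates -/

lemma limsup_log_div_log_le {u : ℕ → ℝ} {κ β : ℝ} {b : ℕ → ℝ} (hb : Tendsto b atTop (nhds β))
    (hlow : ∀ᶠ n : ℕ in atTop, (n : ℝ) ^ (-κ) ≤ u n)
    (hup : ∀ k, ∀ᶠ n : ℕ in atTop, u n ≤ (n : ℝ) ^ (-b k)) :
    limsup (fun n : ℕ => Real.log (u n) / Real.log n) atTop ≤ -β := by
  have hcob : IsCoboundedUnder (· ≤ ·) atTop fun n : ℕ => Real.log (u n) / Real.log n := by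
    refine IsBoundedUnder.isCoboundedUnder_le ⟨-κ, eventually_map.2 ?_⟩
    filter_upwards [hlow, eventually_ge_atTop 2] with n hn hn2
    have hn0 : (0 : ℝ) < n := by positivity
    rw [le_div_iff₀ (Real.log_pos (by exact_mod_cast hn2)), ← Real.log_rpow hn0]
    exact Real.log_le_log (by positivity) hn
  refine ge_of_tendsto' hb.neg fun k => limsup_le_of_le hcob ?_
  filter_upwards [hlow, hup k, eventually_ge_atTop 2] with n hn hn' hn2
  have hn0 : (0 : ℝ) < n := by positivity
  rw [div_le_iff₀ (Real.log_pos (by exact_mod_cast hn2)), ← Real.log_rpow hn0]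
  exact Real.log_le_log (lt_of_lt_of_le (by positivity) hn) hn'

theorem longestEdge_log_limsup_le_general [IsProbabilityMeasure P] [NeZero d] (M : Model d P)
    {c : ℝ} (hc : d < c) (hg : M.g =O[atTop] fun r : ℝ => r ^ (-c)) {γ : ℝ} (hγ : 0 < γ) :
    ∀ᵐ ω ∂P,
      limsup (fun n : ℕ => Real.log (longestEdge M n (rhat M γ n) ω) / Real.log n) atTop ≤
        -((c - 2 * d) / (d * (c - d))) := by
  have hd : (0 : ℝ) < d := by exact_mod_cast NeZero.pos d
  have hcd := sub_pos.2 hc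
  set β := (c - 2 * d) / (d * (c - d)) with hβ
  obtain ⟨b, -, hbβ, hb⟩ := exists_seq_strictMono_tendsto β
  have hup : ∀ᵐ ω ∂P, ∀ k, ∀ᶠ n : ℕ in atTop,
      longestEdge M n (rhat M γ n) ω ≤ (n : ℝ) ^ (-b k) := by
    refine ae_all_iff.2 fun k => ae_eventually_longestEdge_le_rpow_neg M hc hg hγ ?_
    calc b k * (c - d) < β * (c - d) := by gcongr; exact hbβ k
      _ = c / d - 2 := by rw [hβ]; field_simp
  filter_upwards [ae_eventually_rpow_neg_le_longestEdge M hγ, hup] with ω hlow hup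
  exact limsup_log_div_log_le hb hlow hup

/-- Proposition 3, (pe3a): a.s. `limsup log L_n(γ)/log n ≤ -(c-2d)/(d(c-d))`. -/
theorem longestEdge_log_limsup_le (hd : 2 ≤ d) [IsProbabilityMeasure P] (M : Model d P)
    {c : ℝ} (hc : (2 : ℝ) * d < c)
    (hg : M.g =o[atTop] fun r : ℝ => r ^ (-c))
    {γ : ℝ} (hγ : 0 < γ) :
    ∀ᵐ ω ∂P, Filter.limsup
      (fun n : ℕ => Real.log (longestEdge M n (rhat M γ n) ω) / Real.log n)
        atTop ≤ -((c - 2 * d) / (d * (c - d))) := by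
  have : NeZero d := ⟨by omega⟩
  exact longestEdge_log_limsup_le_general M (by linarith [Nat.cast_nonneg (α := ℝ) d]) hg.isBigO hγ

end RCM
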